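/- Let X be a real Banach space that is ρ-convex and σ-smooth with σ ≤ p ≤ ρ, and let M be a closed linear subspace of X. Then for every R > 0 there exist constants C₁, C₂ > 0 such that for all x ∈ X with ‖x‖ < R: C₁ · D_p(Π_M^p x, x)^{1/ρ} ≥ dist(x,M) and dist(x,M) ≥ C₂ · D_p(Π_M^p x, x)^{1/σ}. -/

import Mathlib

open Filter Topology

noncomputable section

/-- The modulus of convexity of a normed space `X`. -/
def modConvex (X : Type*) [NormedAddCommGroup X] (ε : ℝ) : ℝ :=
  sInf {d : ℝ | ∃ x y : X, ‖x‖ = 1 ∧ ‖y‖ = 1 ∧ ε ≤ ‖x - y‖ ∧ d = 1 - ‖x + y‖ / 2}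

/-- The modulus of smoothness of a normed space `X`. -/
def modSmooth (X : Type*) [NormedAddCommGroup X] [NormedSpace ℝ X] (τ : ℝ) : ℝ :=
  sSup {d : ℝ | ∃ x y : X, ‖x‖ = 1 ∧ ‖y‖ = 1 ∧ d = (‖x + τ • y‖ + ‖x - τ • y‖) / 2 - 1}

/-- `X` is uniformly convex: the modulus of convexity is positive for positive ε. -/
def UnifConvex (X : Type*) [NormedAddCommGroup X] : Prop :=
  ∀ ε : ℝ, 0 < ε → ε ≤ 2 → 0 < modConvex X ε

/-- `X` is uniformly smooth: `ρ_X(τ)/τ → 0` as `τ → 0⁺`. -/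
def UnifSmooth (X : Type*) [NormedAddCommGroup X] [NormedSpace ℝ X] : Prop :=
  Tendsto (fun τ => modSmooth X τ / τ) (𝓝[>] (0 : ℝ)) (𝓝 0)

/-- `X` is uniformly convex of power type `ρ`. -/
def PowerConvex (X : Type*) [NormedAddCommGroup X] (ρ : ℝ) : Prop :=
  ∃ c > (0 : ℝ), ∀ ε ∈ Set.Icc (0 : ℝ) 2, c * ε ^ ρ ≤ modConvex X ε

/-- `X` is uniformly smooth of power type `σ` (with `σ > 1`). -/
def PowerSmooth (X : Type*) [NormedAddCommGroup X] [NormedSpace ℝ X] (σ : ℝ) : Prop :=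
  1 < σ ∧ ∃ C > (0 : ℝ), ∀ τ ∈ Set.Icc (0 : ℝ) 1, modSmooth X τ ≤ C * τ ^ σ

variable {X : Type*} [NormedAddCommGroup X] [NormedSpace ℝ X]

/-- The duality mapping `j_p`, the Fréchet derivative of `x ↦ (1/p)‖x‖^p`. -/
def dualityMap (p : ℝ) (x : X) : X →L[ℝ] ℝ :=
  fderiv ℝ (fun y : X => 1 / p * ‖y‖ ^ p) x

/-- The Bregman distance `D_p(x, y)`. -/
def bregmanDist (p : ℝ) (x y : X) : ℝ :=
  1 / p * ‖x‖ ^ p - 1 / p * ‖y‖ ^ p - dualityMap p y (x - y)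

/-- The Bregman projection of `x` onto the set `S`: the minimizer of `m ↦ D_p(m, x)` over `S`. -/
def bregmanProj (p : ℝ) (S : Set X) (x : X) : X :=
  letI : Nonempty X := ⟨x⟩
  Classical.epsilon fun y => y ∈ S ∧ ∀ m ∈ S, bregmanDist p y x ≤ bregmanDist p m x

/-- The Bregman distance `D_p(S, x)` from the point `x` to the set `S`. -/
def bregmanDistSet (p : ℝ) (S : Set X) (x : X) : ℝ :=
  bregmanDist p (bregmanProj p S x) x

/-- The metric projection of `x` onto the set `S`: the point of `S` nearest to `x`. -/
def metricProj (S : Set X) (x : X) : X :=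
  letI : Nonempty X := ⟨x⟩
  Classical.epsilon fun y => y ∈ S ∧ ∀ m ∈ S, ‖x - y‖ ≤ ‖x - m‖

/-!
Write `Δ_u F(x) = F(x + u) + F(x - u) - 2 F(x)`. The Bregman distance `D_p(·, x)` differs from
`‖·‖^p / p` by an affine function, so both have the same second differences, up to the factor
`1 / p`. On bounded sets, `ρ`-convexity gives `Δ_u ‖·‖^p ≥ k ‖u‖^ρ` and `σ`-smoothness gives
`Δ_u ‖·‖^p ≤ K ‖u‖^σ`. Since `D_p(·, x) ≥ 0` vanishes at `x`, the lower bound, taken at the midpoint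
of `x` and its projection `Π x`, gives `dist(x, M)^ρ ≲ D_p(Π x, x)`; the upper bound, taken at `x`
with `u = m - x` for nearly closest points `m ∈ M`, gives `D_p(Π x, x) ≲ dist(x, M)^σ`. The lower
bound also makes minimizing sequences Cauchy, so `Π x` exists.

The estimates for `‖·‖^p` need `σ ≤ 2 ≤ ρ`, which holds as soon as `dim X ≥ 2`: restrict the norm to
a line missing the origin. A second difference dominating `h^r` forces `r ≥ 2`, while one that is
`O(h^r)` with `r > 2` vanishes, although the norm is not affine along the line. If `dim X ≤ 1`, then
`M` is `0` or `X` and `D_p(Π x, x)` is `(1 - 1 / p) ‖x‖^p` or `0`.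
-/
section RealPowers

lemma rpow_add_mul_sub_le_rpow {p a b : ℝ} (hp : 1 < p) (ha : 0 ≤ a) (hb : 0 ≤ b) :
    b ^ p + p * b ^ (p - 1) * (a - b) ≤ a ^ p := by
  rcases hb.eq_or_lt with rfl | hb
  · simpa [Real.zero_rpow (by linarith : p ≠ 0), Real.zero_rpow (by linarith : p - 1 ≠ 0)]
      using Real.rpow_nonneg ha p
  · have bernoulli := one_add_mul_self_le_rpow_one_add (s := a / b - 1)
      (by linarith [div_nonneg ha hb.le]) hp.le
    rw [add_sub_cancel, Real.div_rpow ha hb.le, le_div_iff₀ (by positivity)] at bernoulli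
    refine le_trans (le_of_eq ?_) bernoulli
    rw [Real.rpow_sub_one hb.ne']
    field_simp

lemma rpow_le_rpow_sub_mul_rpow {t R a b : ℝ} (ht : 0 ≤ t) (htR : t ≤ R) (ha : 0 ≤ a)
    (hab : a ≤ b) : t ^ b ≤ R ^ (b - a) * t ^ a := by
  have hba : 0 ≤ b - a := sub_nonneg.2 hab
  calc t ^ b = t ^ (b - a) * t ^ a := by rw [← Real.rpow_add_of_nonneg ht hba ha, sub_add_cancel]
    _ ≤ R ^ (b - a) * t ^ a := by gcongr

lemma rpow_sub_one_mul_sub_le_rpow_sub_rpow {p v w : ℝ} (hp : 1 < p) (hv : 0 ≤ v) (hvw : v ≤ w) :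
    w ^ (p - 1) * (w - v) ≤ w ^ p - v ^ p := by
  have h_mono : v ^ (p - 1) * v ≤ w ^ (p - 1) * v := by
    gcongr
  have h_pow : ∀ t : ℝ, 0 ≤ t → t ^ (p - 1) * t = t ^ p := fun t ht => by
    rw [← Real.rpow_add_one' ht (by linarith), sub_add_cancel]
  rw [h_pow v hv] at h_mono
  linarith [h_pow w (hv.trans hvw)]

lemma rpow_one_add_le_one_add_mul_add_sq {p a : ℝ} (hp : 0 ≤ p) (ha : |a| ≤ 1) :
    (1 + a) ^ p ≤ 1 + p * a + p ^ 2 * Real.exp p * a ^ 2 := by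
  have h_exp : (1 + a) ^ p ≤ Real.exp (p * a) := by
    rw [mul_comm, Real.exp_mul]
    exact Real.rpow_le_rpow (by linarith [neg_le_of_abs_le ha])
      (by linarith [Real.add_one_le_exp a]) hp
  have h_taylor : Real.exp (p * a) - (1 + p * a) ≤ |p * a| ^ 2 * Real.exp |p * a| := by
    have h := Complex.norm_exp_sub_sum_le_norm_mul_exp (p * a : ℝ) 2
    simp only [Finset.sum_range_succ, Finset.sum_range_zero, pow_zero, pow_one, zero_add,
      Nat.factorial_zero, Nat.factorial_one, Nat.cast_one, div_one] at h
    norm_cast at h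
    exact (le_abs_self _).trans h
  have h_abs : |p * a| ≤ p := by
    rw [abs_mul, abs_of_nonneg hp]
    exact mul_le_of_le_one_right hp ha
  have h_rem : |p * a| ^ 2 * Real.exp |p * a| ≤ (p * a) ^ 2 * Real.exp p := by
    rw [sq_abs]
    gcongr
  linarith [mul_pow p a 2]

lemma min_mul_le_rpow_one_add_sub_rpow_one_sub {q z : ℝ} (hq : 0 ≤ q) (hz : 0 ≤ z)
    (hz1 : z ≤ 1) : min q 1 * z ≤ (1 + z) ^ q - (1 - z) ^ q := by
  rcases le_total q 1 with h | h
  · have h_sub := rpow_one_add_le_one_add_mul_self (s := -z) (by linarith) hq h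
    have h_add : 1 ≤ (1 + z) ^ q := Real.one_le_rpow (by linarith) hq
    rw [← sub_eq_add_neg] at h_sub
    rw [min_eq_left h]
    linarith
  · have h_add := one_add_mul_self_le_rpow_one_add (s := z) (by linarith) h
    have h_sub : (1 - z) ^ q ≤ 1 := Real.rpow_le_one (by linarith) (by linarith) hq
    rw [min_eq_right h]
    nlinarith

-- Comparing with the tangents at `1 ± z / 2`, instead of at `1`, gains the increment of the
-- derivative `p t ^ (p - 1)` between them; second derivatives would blow up at `0` for `p < 2`.
lemma two_add_mul_sq_le_rpow_one_add_add_rpow_one_sub {p z : ℝ} (hp : 1 < p) (hz : 0 ≤ z)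
    (hz1 : z ≤ 1) : 2 + p * min (p - 1) 1 / 4 * z ^ 2 ≤ (1 + z) ^ p + (1 - z) ^ p := by
  have h_right := rpow_add_mul_sub_le_rpow (a := 1 + z) (b := 1 + z / 2) hp
    (by linarith) (by linarith)
  have h_left := rpow_add_mul_sub_le_rpow (a := 1 - z) (b := 1 - z / 2) hp
    (by linarith) (by linarith)
  have h_right_one := one_add_mul_self_le_rpow_one_add (s := z / 2) (by linarith) hp.le
  have h_left_one := one_add_mul_self_le_rpow_one_add (s := -(z / 2)) (by linarith) hp.le
  have h_deriv := mul_le_mul_of_nonneg_left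
    (min_mul_le_rpow_one_add_sub_rpow_one_sub (q := p - 1) (z := z / 2) (by linarith) (by linarith)
      (by linarith)) (show 0 ≤ p * (z / 2) by positivity)
  rw [← sub_eq_add_neg] at h_left_one
  nlinarith

lemma exists_mul_sq_le_midpoint_rpow {p : ℝ} (hp : 1 < p) : ∃ k > 0, ∀ l : ℝ, 0 ≤ l → l ≤ 1 →
    k * ((1 - l) / 2) ^ 2 ≤ (1 + l ^ p) / 2 - ((1 + l) / 2) ^ p := by
  have : 0 < min (p - 1) 1 := lt_min (by linarith) one_pos
  refine ⟨p * min (p - 1) 1 / 8 * (1 / 2) ^ p, by positivity, fun l hl hl1 => ?_⟩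
  set w := (1 + l) / 2 with hw
  set z := (1 - l) / 2 / w
  have hw0 : 0 < w := by positivity
  have hw1 : w ≤ 1 := by linarith
  have hwz : w * z = (1 - l) / 2 := mul_div_cancel₀ _ hw0.ne'
  have hz0 : 0 ≤ z := div_nonneg (by linarith) hw0.le
  have hz1 : z ≤ 1 := (div_le_one hw0).2 (by linarith)
  have h_one : w ^ p * (1 + z) ^ p = 1 := by
    rw [← Real.mul_rpow hw0.le (by linarith), mul_add, hwz, mul_one, hw, ← add_div]
    norm_num
  have h_l : w ^ p * (1 - z) ^ p = l ^ p := by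
    rw [← Real.mul_rpow hw0.le (by linarith), mul_sub, hwz]
    congr 1
    linarith
  have h_wp : (1 / 2 : ℝ) ^ p ≤ w ^ p :=
    Real.rpow_le_rpow (by norm_num) (by linarith) (by linarith)
  have h_z : ((1 - l) / 2) ^ 2 ≤ z ^ 2 := by
    refine pow_le_pow_left₀ (by linarith) ?_ 2
    rw [← hwz]
    exact mul_le_of_le_one_left hz0 hw1
  calc _ = p * min (p - 1) 1 / 8 * ((1 / 2) ^ p * ((1 - l) / 2) ^ 2) := by ring
    _ ≤ p * min (p - 1) 1 / 8 * (w ^ p * z ^ 2) := by gcongr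
    _ = w ^ p * (2 + p * min (p - 1) 1 / 4 * z ^ 2) / 2 - w ^ p := by ring
    _ ≤ w ^ p * ((1 + z) ^ p + (1 - z) ^ p) / 2 - w ^ p := by
      gcongr w ^ p * ?_ / 2 - w ^ p
      exact two_add_mul_sq_le_rpow_one_add_add_rpow_one_sub hp hz0 hz1
    _ = _ := by rw [mul_add, h_one, h_l]

end RealPowers


/-- The symmetric second difference of `g` at `x` with increment `h`. Bounding it by a power of
`‖h‖` from below or above expresses quantitative convexity or smoothness without derivatives. -/
def secondDiff {E : Type*} [AddCommGroup E] (g : E → ℝ) (h x : E) : ℝ :=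
  g (x + h) + g (x - h) - 2 * g x

section SecondDiff

lemma secondDiff_neg {E : Type*} [AddCommGroup E] (g : E → ℝ) (h x : E) :
    secondDiff (-g) h x = -secondDiff g h x := by
  simp only [secondDiff, Pi.neg_apply]
  ring

lemma secondDiff_two_mul (g : ℝ → ℝ) (h t : ℝ) :
    secondDiff g (2 * h) t =
      secondDiff g h (t + h) + 2 * secondDiff g h t + secondDiff g h (t - h) := by
  simp only [secondDiff, two_mul, add_sub_cancel_right, sub_add_cancel, ← add_assoc, sub_sub]
  ring

variable {g : ℝ → ℝ}

lemma four_pow_mul_le_secondDiff {h B : ℝ} (hh : 0 ≤ h)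
    (hg : ∀ t, |t| + h ≤ 1 → B ≤ secondDiff g h t) (n : ℕ) :
    ∀ t, |t| + 2 ^ n * h ≤ 1 → 4 ^ n * B ≤ secondDiff g (2 ^ n * h) t := by
  induction n with
  | zero => simpa only [pow_zero, one_mul] using hg
  | succ n ih =>
    intro t ht
    have h_step : 0 ≤ 2 ^ n * h := by positivity
    rw [pow_succ' 2, mul_assoc] at ht ⊢
    have h_add := ih (t + 2 ^ n * h) (by linarith [abs_add_le t (2 ^ n * h), abs_of_nonneg h_step])
    have h_mid := ih t (by linarith)
    have h_sub := ih (t - 2 ^ n * h) (by linarith [abs_sub t (2 ^ n * h), abs_of_nonneg h_step])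
    rw [secondDiff_two_mul, pow_succ' 4]
    linarith

lemma mul_four_mul_half_rpow_pow_le_secondDiff {K r : ℝ}
    (hg : ∀ h t, 0 < h → |t| + h ≤ 1 → K * h ^ r ≤ secondDiff g h t) (n : ℕ) :
    K * (4 * (1 / 2) ^ r) ^ n ≤ secondDiff g 1 0 := by
  have h_scale : (2 : ℝ) ^ n * (1 / 2) ^ n = 1 := by rw [← mul_pow]; norm_num
  have h_iter := four_pow_mul_le_secondDiff (by positivity)
    (fun t => hg ((1 / 2) ^ n) t (by positivity)) n 0 (by rw [h_scale, abs_zero, zero_add])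
  rw [h_scale] at h_iter
  calc K * (4 * (1 / 2) ^ r) ^ n = 4 ^ n * (K * ((1 / 2) ^ n) ^ r) := by
        rw [← Real.rpow_pow_comm (by norm_num), mul_pow]
        ring
    _ ≤ secondDiff g 1 0 := h_iter

lemma two_le_of_mul_rpow_le_secondDiff {K r : ℝ} (hK : 0 < K)
    (hg : ∀ h t, 0 < h → |t| + h ≤ 1 → K * h ^ r ≤ secondDiff g h t) : 2 ≤ r := by
  by_contra! hr
  have h_base : 1 < 4 * (1 / 2 : ℝ) ^ r := by
    have := Real.rpow_lt_rpow_of_exponent_gt (x := (1 / 2 : ℝ)) (by norm_num) (by norm_num) hr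
    norm_num at this ⊢
    linarith
  obtain ⟨n, hn⟩ := pow_unbounded_of_one_lt (secondDiff g 1 0 / K) h_base
  rw [div_lt_iff₀' hK] at hn
  exact hn.not_ge (mul_four_mul_half_rpow_pow_le_secondDiff hg n)

lemma secondDiff_one_nonpos_of_le_mul_rpow {K r : ℝ} (hr : 2 < r)
    (hg : ∀ h t, 0 < h → |t| + h ≤ 1 → secondDiff g h t ≤ K * h ^ r) :
    secondDiff g 1 0 ≤ 0 := by
  have h_base : 4 * (1 / 2 : ℝ) ^ r < 1 := by
    have := Real.rpow_lt_rpow_of_exponent_gt (x := (1 / 2 : ℝ)) (by norm_num) (by norm_num) hr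
    norm_num at this ⊢
    linarith
  have h_iter : ∀ n : ℕ, secondDiff g 1 0 ≤ K * (4 * (1 / 2) ^ r) ^ n := fun n => by
    have := mul_four_mul_half_rpow_pow_le_secondDiff (g := -g) (K := -K) (r := r)
      (fun h t hh ht => by rw [secondDiff_neg]; linarith [hg h t hh ht]) n
    rw [secondDiff_neg] at this
    linarith
  have h_lim := (tendsto_pow_atTop_nhds_zero_of_lt_one (by positivity) h_base).const_mul K
  rw [mul_zero] at h_lim
  exact ge_of_tendsto' h_lim h_iter

end SecondDiff

section Moduli

open NormedSpace

lemma PowerConvex.exists_mul_rpow_le {E : Type*} [NormedAddCommGroup E] {ρ : ℝ}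
    (h : PowerConvex E ρ) :
    ∃ c > 0, ∀ x y : E, ‖x‖ = 1 → ‖y‖ = 1 → c * ‖x - y‖ ^ ρ ≤ 1 - ‖x + y‖ / 2 := by
  obtain ⟨c, hc, h_mod⟩ := h
  refine ⟨c, hc, fun x y hx hy =>
    (h_mod ‖x - y‖ ⟨norm_nonneg _, ?_⟩).trans (csInf_le ⟨0, ?_⟩ ⟨x, y, hx, hy, le_rfl, rfl⟩)⟩
  · linarith [norm_sub_le x y]
  · rintro d ⟨x, y, hx, hy, -, rfl⟩
    linarith [norm_add_le x y]

lemma PowerConvex.exists_norm_add_le {ρ : ℝ} (h : PowerConvex X ρ) :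
    ∃ c > 0, ∀ a b : X,
      ‖a + b‖ ≤ ‖a‖ + ‖b‖ - 2 * c * min ‖a‖ ‖b‖ * ‖normalize a - normalize b‖ ^ ρ := by
  obtain ⟨c, hc, h_unit⟩ := h.exists_mul_rpow_le
  refine ⟨c, hc, fun a b => ?_⟩
  wlog hab : ‖b‖ ≤ ‖a‖ generalizing a b
  · rw [add_comm a, add_comm ‖a‖, min_comm, norm_sub_rev]
    exact this b a (le_of_not_ge hab)
  rw [min_eq_right hab]
  rcases eq_or_ne b 0 with rfl | hb
  · simp
  have ha : a ≠ 0 := norm_pos_iff.1 ((norm_pos_iff.2 hb).trans_le hab)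
  have h_split :
      a + b = (‖a‖ - ‖b‖) • normalize a + ‖b‖ • (normalize a + normalize b) := by
    rw [smul_add, norm_smul_normalize, sub_smul, norm_smul_normalize]
    abel
  have h_tri := norm_add_le ((‖a‖ - ‖b‖) • normalize a) (‖b‖ • (normalize a + normalize b))
  rw [← h_split, norm_smul, norm_smul, norm_normalize ha, norm_norm,
    Real.norm_of_nonneg (sub_nonneg.2 hab)] at h_tri
  have h_conv := mul_le_mul_of_nonneg_left
    (h_unit _ _ (norm_normalize ha) (norm_normalize hb)) (show 0 ≤ 2 * ‖b‖ by positivity)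
  linarith

lemma PowerSmooth.mono {σ τ : ℝ} (h : PowerSmooth X σ) (hτ : 1 < τ) (hτσ : τ ≤ σ) :
    PowerSmooth X τ := by
  obtain ⟨-, C, hC, h_mod⟩ := h
  refine ⟨hτ, C, hC, fun t ht => (h_mod t ht).trans ?_⟩
  exact mul_le_mul_of_nonneg_left
    (Real.rpow_le_rpow_of_exponent_ge' ht.1 ht.2 (by linarith) hτσ) hC.le

lemma norm_add_smul_add_norm_sub_smul_le_modSmooth {x y : X} (hx : ‖x‖ = 1) (hy : ‖y‖ = 1)
    (t : ℝ) : (‖x + t • y‖ + ‖x - t • y‖) / 2 - 1 ≤ modSmooth X t := by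
  refine le_csSup ⟨|t|, ?_⟩ ⟨x, y, hx, hy, rfl⟩
  rintro d ⟨x, y, hx, hy, rfl⟩
  have h_norm : ‖t • y‖ = |t| := by rw [norm_smul, hy, mul_one, Real.norm_eq_abs]
  linarith [norm_add_le x (t • y), norm_sub_le x (t • y)]

lemma PowerSmooth.exists_secondDiff_norm_le {σ : ℝ} (h : PowerSmooth X σ) :
    ∃ C > 0, ∀ x : X, x ≠ 0 → ∀ u, secondDiff norm u x ≤ C * ‖x‖ ^ (1 - σ) * ‖u‖ ^ σ := by
  obtain ⟨hσ, C, hC, h_mod⟩ := h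
  refine ⟨2 * C + 2, by positivity, fun x hx u => ?_⟩
  have hx_pos : 0 < ‖x‖ := norm_pos_iff.2 hx
  set t := ‖u‖ / ‖x‖
  have h_rhs : (2 * C + 2) * ‖x‖ ^ (1 - σ) * ‖u‖ ^ σ = ‖x‖ * ((2 * C + 2) * t ^ σ) := by
    rw [Real.div_rpow (norm_nonneg u) hx_pos.le, Real.rpow_sub hx_pos, Real.rpow_one]
    ring
  rw [secondDiff, h_rhs]
  rcases eq_or_ne u 0 with rfl | hu
  · have h_nonneg : 0 ≤ ‖x‖ * ((2 * C + 2) * t ^ σ) := by positivity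
    simpa [← two_mul] using h_nonneg
  rcases le_total t 1 with ht1 | ht1
  · have h_smul : ‖x‖ • t • normalize u = u := by
      rw [smul_smul, mul_div_cancel₀ _ hx_pos.ne', norm_smul_normalize]
    have h_add : ‖x + u‖ = ‖x‖ * ‖normalize x + t • normalize u‖ := by
      rw [← norm_smul_of_nonneg (norm_nonneg x), smul_add, h_smul, norm_smul_normalize]
    have h_sub : ‖x - u‖ = ‖x‖ * ‖normalize x - t • normalize u‖ := by
      rw [← norm_smul_of_nonneg (norm_nonneg x), smul_sub, h_smul, norm_smul_normalize]
    have h_unit := (norm_add_smul_add_norm_sub_smul_le_modSmooth (norm_normalize hx)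
      (norm_normalize hu) t).trans (h_mod t ⟨by positivity, ht1⟩)
    have h_tσ : 0 ≤ t ^ σ := by positivity
    rw [h_add, h_sub]
    linear_combination 2 * ‖x‖ * h_unit + 2 * ‖x‖ * h_tσ
  · have h_tri := norm_add_le x u
    have h_t : ‖x‖ * t ≤ ‖x‖ * t ^ σ := by
      gcongr
      simpa using Real.rpow_le_rpow_of_exponent_le ht1 hσ.le
    have h_u : ‖x‖ * t = ‖u‖ := mul_div_cancel₀ _ hx_pos.ne'
    have h_C : 0 ≤ ‖x‖ * (2 * C * t ^ σ) := by positivity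
    linarith [norm_sub_le x u]

end Moduli

section Exponents

open NormedSpace

lemma secondDiff_comp_line (F : X → ℝ) (x y : X) (h t : ℝ) :
    secondDiff (fun s => F (x + s • y)) h t = secondDiff F (h • y) (x + t • y) := by
  simp only [secondDiff, add_smul, sub_smul, add_assoc, add_sub_assoc]

lemma exists_dual_of_one_lt_rank (hX : 1 < Module.rank ℝ X) :
    ∃ (f : StrongDual ℝ X) (x y : X), ‖f‖ ≤ 1 ∧ ‖x‖ = 1 ∧ f x = 1 ∧ ‖y‖ = 1 ∧ f y = 0 := by
  have : Nontrivial X := rank_pos_iff_nontrivial.1 (zero_lt_one.trans hX)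
  obtain ⟨x, hx⟩ := exists_norm_eq X zero_le_one
  obtain ⟨f, hf, hfx⟩ := exists_dual_vector'' ℝ x
  rw [hx, RCLike.ofReal_one] at hfx
  have hx0 : x ≠ 0 := norm_ne_zero_iff.1 (hx.trans_ne one_ne_zero)
  obtain ⟨z, hxz⟩ := exists_linearIndependent_pair_of_one_lt_rank hX hx0
  have hz : z - f z • x ≠ 0 := fun h0 => by
    have := LinearIndependent.pair_iff.1 hxz (-f z) 1 (by rw [neg_smul, one_smul, ← h0]; abel)
    exact one_ne_zero this.2
  refine ⟨f, x, normalize (z - f z • x), hf, hx, hfx, norm_normalize hz, ?_⟩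
  simp [NormedSpace.normalize, hfx]

lemma one_le_norm_of_apply_eq_one {f : StrongDual ℝ X} (hf : ‖f‖ ≤ 1) {x : X} (hx : f x = 1) :
    1 ≤ ‖x‖ := by
  simpa [hx] using f.le_of_opNorm_le hf x

lemma norm_sub_le_mul_norm_normalize_sub {f : StrongDual ℝ X} {a b : X} (ha : f a = 1)
    (hb : f b = 1) :
    ‖a - b‖ ≤ ‖a‖ * (1 + ‖f‖ * ‖b‖) * ‖normalize a - normalize b‖ := by
  have ha0 : ‖a‖ ≠ 0 := norm_ne_zero_iff.2 fun h0 => by simp [h0] at ha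
  have hb0 : ‖b‖ ≠ 0 := norm_ne_zero_iff.2 fun h0 => by simp [h0] at hb
  have h_apply : f (normalize b - normalize a) = ‖b‖⁻¹ - ‖a‖⁻¹ := by
    simp [NormedSpace.normalize, ha, hb]
  have h_coeff : |‖b‖⁻¹ - ‖a‖⁻¹| ≤ ‖f‖ * ‖normalize a - normalize b‖ := by
    rw [← h_apply, norm_sub_rev]
    exact f.le_opNorm _
  have h_split :
      a - b = ‖a‖ • ((normalize a - normalize b) + (‖b‖⁻¹ - ‖a‖⁻¹) • b) := by
    rw [sub_smul, smul_add, smul_sub, smul_sub, norm_smul_normalize, smul_inv_smul₀ ha0]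
    simp only [NormedSpace.normalize]
    abel
  calc ‖a - b‖ = ‖a‖ * ‖(normalize a - normalize b) + (‖b‖⁻¹ - ‖a‖⁻¹) • b‖ := by
        rw [h_split, norm_smul, norm_norm]
    _ ≤ ‖a‖ * (‖normalize a - normalize b‖ + ‖f‖ * ‖normalize a - normalize b‖ * ‖b‖) := by
        gcongr
        refine (norm_add_le _ _).trans ?_
        rw [norm_smul, Real.norm_eq_abs]
        gcongr
    _ = ‖a‖ * (1 + ‖f‖ * ‖b‖) * ‖normalize a - normalize b‖ := by ring

lemma PowerConvex.two_le {ρ : ℝ} (h : PowerConvex X ρ) (hρ : 0 ≤ ρ)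
    (hX : 1 < Module.rank ℝ X) : 2 ≤ ρ := by
  obtain ⟨c, hc, h_tri⟩ := h.exists_norm_add_le
  obtain ⟨f, x, y, hf, hx, hfx, hy, hfy⟩ := exists_dual_of_one_lt_rank hX
  have hf_line : ∀ t : ℝ, f (x + t • y) = 1 := fun t => by simp [hfx, hfy]
  have h_lower : ∀ t : ℝ, 1 ≤ ‖x + t • y‖ := fun t => one_le_norm_of_apply_eq_one hf (hf_line t)
  have h_upper : ∀ t : ℝ, |t| ≤ 1 → ‖x + t • y‖ ≤ 2 := fun t ht => by
    have := norm_add_le x (t • y)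
    rw [norm_smul, hx, hy, Real.norm_eq_abs] at this
    linarith
  refine two_le_of_mul_rpow_le_secondDiff (g := fun t => ‖x + t • y‖) (K := 2 * c * (1 / 3) ^ ρ)
    (by positivity) fun h t hh ht => ?_
  set a := x + (t + h) • y with ha
  set b := x + (t - h) • y with hb
  have ha2 : ‖a‖ ≤ 2 := h_upper _ ((abs_add_le t h).trans (by rwa [abs_of_pos hh]))
  have hb2 : ‖b‖ ≤ 2 := h_upper _ ((abs_sub t h).trans (by rwa [abs_of_pos hh]))
  have h_angle : 1 / 3 * h ≤ ‖normalize a - normalize b‖ := by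
    have h_norm : ‖a - b‖ = 2 * h := by
      rw [show a - b = (2 * h) • y by module, norm_smul, hy, Real.norm_of_nonneg (by linarith),
        mul_one]
    have h_le := norm_sub_le_mul_norm_normalize_sub (hf_line (t + h)) (hf_line (t - h))
    have h_factor : ‖a‖ * (1 + ‖f‖ * ‖b‖) ≤ 2 * (1 + 1 * 2) := by gcongr
    rw [← ha, ← hb, h_norm] at h_le
    linarith [h_le.trans (mul_le_mul_of_nonneg_right h_factor (norm_nonneg _))]
  have h_sum : ‖a + b‖ = 2 * ‖x + t • y‖ := by
    rw [show a + b = (2 : ℝ) • (x + t • y) by module, norm_smul, Real.norm_ofNat]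
  have h_gain : (1 / 3 * h) ^ ρ ≤ min ‖a‖ ‖b‖ * ‖normalize a - normalize b‖ ^ ρ :=
    (Real.rpow_le_rpow (by positivity) h_angle hρ).trans
      (le_mul_of_one_le_left (by positivity) (le_min (h_lower _) (h_lower _)))
  have h_sec := h_tri a b
  rw [Real.mul_rpow (by norm_num) hh.le] at h_gain
  simp only [secondDiff, ← ha, ← hb]
  linear_combination h_sec + 2 * c * h_gain - h_sum

lemma PowerSmooth.le_two {σ : ℝ} (h : PowerSmooth X σ) (hX : 1 < Module.rank ℝ X) : σ ≤ 2 := by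
  by_contra! hσ
  obtain ⟨C, hC, h_sec⟩ := h.exists_secondDiff_norm_le
  obtain ⟨f, x, y, hf, hx, hfx, hy, hfy⟩ := exists_dual_of_one_lt_rank hX
  have h_lower : ∀ t : ℝ, 1 ≤ ‖x + t • (3 : ℝ) • y‖ := fun t =>
    one_le_norm_of_apply_eq_one hf (by simp [hfx, hfy])
  have h_norm : ‖(3 : ℝ) • y‖ = 3 := by rw [norm_smul, hy, Real.norm_ofNat, mul_one]
  have h_le := secondDiff_one_nonpos_of_le_mul_rpow (g := fun t => ‖x + t • (3 : ℝ) • y‖)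
    (K := C * 3 ^ σ) hσ fun h t hh _ => by
      have h_pow : ‖x + t • (3 : ℝ) • y‖ ^ (1 - σ) ≤ 1 :=
        Real.rpow_le_one_of_one_le_of_nonpos (h_lower t) (by linarith)
      have h_line := h_sec (x + t • (3 : ℝ) • y)
        (norm_ne_zero_iff.1 (by linarith [h_lower t])) (h • (3 : ℝ) • y)
      rw [norm_smul h, h_norm, Real.norm_of_nonneg hh.le,
        Real.mul_rpow hh.le (by norm_num)] at h_line
      rw [secondDiff_comp_line]
      calc _ ≤ _ := h_line
        _ ≤ C * 1 * (h ^ σ * 3 ^ σ) := by gcongr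
        _ = C * 3 ^ σ * h ^ σ := by ring
  have h_tri := norm_sub_le (x + (3 : ℝ) • y) (x - (3 : ℝ) • y)
  rw [show x + (3 : ℝ) • y - (x - (3 : ℝ) • y) = (2 : ℝ) • (3 : ℝ) • y by module, norm_smul,
    h_norm, Real.norm_ofNat] at h_tri
  simp only [secondDiff, zero_add, zero_sub, one_smul, neg_smul, zero_smul, add_zero, hx,
    ← sub_eq_add_neg] at h_le
  linarith

lemma eq_bot_or_eq_top_of_rank_le_one {K V : Type*} [DivisionRing K] [AddCommGroup V]
    [Module K V] (hV : Module.rank K V ≤ 1) (M : Submodule K V) : M = ⊥ ∨ M = ⊤ := by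
  obtain ⟨v, hv⟩ := rank_le_one_iff.1 hV
  refine or_iff_not_imp_left.2 fun hM => Submodule.eq_top_iff'.2 fun x => ?_
  obtain ⟨w, hwM, hw0⟩ := Submodule.exists_mem_ne_zero_of_ne_bot hM
  obtain ⟨r, rfl⟩ := hv w
  obtain ⟨s, rfl⟩ := hv x
  have hr : r ≠ 0 := fun h0 => hw0 (by rw [h0, zero_smul])
  exact M.smul_mem s ((M.smul_mem_iff hr).1 hwM)

end Exponents

section NormPower

open NormedSpace

lemma secondDiff_norm_rpow_smul {p r : ℝ} (hr : 0 ≤ r) (u x : X) :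
    secondDiff (fun y => ‖y‖ ^ p) (r • u) (r • x) = r ^ p * secondDiff (fun y => ‖y‖ ^ p) u x := by
  simp only [secondDiff, ← smul_add, ← smul_sub, norm_smul_of_nonneg hr,
    Real.mul_rpow hr (norm_nonneg _)]
  ring

lemma PowerSmooth.exists_secondDiff_norm_rpow_le_of_norm_eq_one {p σ : ℝ} (h : PowerSmooth X σ)
    (hp : 0 < p) (hσ : σ ≤ 2) : ∃ K > 0, ∀ x u : X, ‖x‖ = 1 → ‖u‖ ≤ 1 →
      secondDiff (fun y => ‖y‖ ^ p) u x ≤ K * ‖u‖ ^ σ := by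
  obtain ⟨C, hC, h_sec⟩ := h.exists_secondDiff_norm_le
  refine ⟨p * C + 2 * (p ^ 2 * Real.exp p), by positivity, fun x u hx hu => ?_⟩
  have h_norm := h_sec x (norm_ne_zero_iff.1 (hx.trans_ne one_ne_zero)) u
  simp only [secondDiff, hx, Real.one_rpow, mul_one] at h_norm ⊢
  have h_add_abs : |‖x + u‖ - 1| ≤ ‖u‖ := by
    simpa [hx] using abs_norm_sub_norm_le (x + u) x
  have h_sub_abs : |‖x - u‖ - 1| ≤ ‖u‖ := by
    simpa [hx] using abs_norm_sub_norm_le (x - u) x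
  have h_add := rpow_one_add_le_one_add_mul_add_sq hp.le (h_add_abs.trans hu)
  have h_sub := rpow_one_add_le_one_add_mul_add_sq hp.le (h_sub_abs.trans hu)
  rw [add_sub_cancel] at h_add h_sub
  have h_sq : ‖u‖ ^ 2 ≤ ‖u‖ ^ σ := by
    rw [← Real.rpow_two]
    exact Real.rpow_le_rpow_of_exponent_ge' (norm_nonneg u) hu (by linarith [h.1]) hσ
  have h_rem : (‖x + u‖ - 1) ^ 2 + (‖x - u‖ - 1) ^ 2 ≤ 2 * ‖u‖ ^ σ := by
    linarith [sq_le_sq' (neg_le_of_abs_le h_add_abs) (le_of_abs_le h_add_abs),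
      sq_le_sq' (neg_le_of_abs_le h_sub_abs) (le_of_abs_le h_sub_abs)]
  linear_combination h_add + h_sub + p * h_norm + p ^ 2 * Real.exp p * h_rem

lemma PowerSmooth.exists_secondDiff_norm_rpow_le {p σ : ℝ} (h : PowerSmooth X σ) (hσ : σ ≤ 2)
    (hσp : σ ≤ p) {R : ℝ} (hR : 0 < R) : ∃ K > 0, ∀ x u : X, ‖x‖ ≤ R → ‖u‖ ≤ R →
      secondDiff (fun y => ‖y‖ ^ p) u x ≤ K * ‖u‖ ^ σ := by
  have hσ1 := h.1
  have hp : 0 < p := by linarith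
  obtain ⟨K, hK, h_unit⟩ := h.exists_secondDiff_norm_rpow_le_of_norm_eq_one hp hσ
  refine ⟨(K + 2 * 2 ^ p) * R ^ (p - σ), by positivity, fun x u hxR huR => ?_⟩
  rcases le_or_gt ‖x‖ ‖u‖ with hxu | hux
  · have h_bound : ∀ v : X, ‖v‖ ≤ 2 * ‖u‖ → ‖v‖ ^ p ≤ 2 ^ p * (R ^ (p - σ) * ‖u‖ ^ σ) :=
      fun v hv => calc ‖v‖ ^ p ≤ (2 * ‖u‖) ^ p := by gcongr
        _ = 2 ^ p * ‖u‖ ^ p := Real.mul_rpow zero_le_two (norm_nonneg u)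
        _ ≤ 2 ^ p * (R ^ (p - σ) * ‖u‖ ^ σ) := by
          gcongr
          exact rpow_le_rpow_sub_mul_rpow (norm_nonneg u) huR (by linarith) hσp
    have h_add := h_bound (x + u) (by linarith [norm_add_le x u])
    have h_sub := h_bound (x - u) (by linarith [norm_sub_le x u])
    have hx : 0 ≤ ‖x‖ ^ p := by positivity
    have hu : 0 ≤ K * R ^ (p - σ) * ‖u‖ ^ σ := by positivity
    simp only [secondDiff]
    linear_combination h_add + h_sub + 2 * hx + hu
  · have hx : 0 < ‖x‖ := (norm_nonneg u).trans_lt hux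
    have hu : ‖‖x‖⁻¹ • u‖ = ‖u‖ / ‖x‖ := by
      rw [norm_smul, norm_inv, norm_norm, inv_mul_eq_div]
    have h_scale := secondDiff_norm_rpow_smul (p := p) hx.le (‖x‖⁻¹ • u) (normalize x)
    rw [smul_inv_smul₀ hx.ne', norm_smul_normalize] at h_scale
    calc secondDiff (fun y => ‖y‖ ^ p) u x ≤ ‖x‖ ^ p * (K * (‖u‖ / ‖x‖) ^ σ) := by
          rw [h_scale, ← hu]
          gcongr
          exact h_unit _ _ (norm_normalize (norm_pos_iff.1 hx))
            (hu.trans_le ((div_le_one hx).2 hux.le))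
      _ = K * ‖x‖ ^ (p - σ) * ‖u‖ ^ σ := by
        rw [Real.div_rpow (norm_nonneg u) hx.le, Real.rpow_sub hx]
        ring
      _ ≤ (K + 2 * 2 ^ p) * R ^ (p - σ) * ‖u‖ ^ σ := by
        gcongr
        exact le_add_of_nonneg_right (by positivity)

lemma PowerConvex.exists_norm_add_le_of_norm_eq_one {ρ : ℝ} (h : PowerConvex X ρ) (hρ : 1 ≤ ρ) :
    ∃ c > 0, ∀ a b : X, ‖a‖ = 1 → ‖b‖ ≤ 1 →
      ‖a + b‖ ≤ 1 + ‖b‖ - 2 * c * ‖‖b‖ • a - b‖ ^ ρ := by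
  obtain ⟨c, hc, h_tri⟩ := h.exists_norm_add_le
  refine ⟨c, hc, fun a b ha hb => (h_tri a b).trans ?_⟩
  have h_norm : ‖‖b‖ • a - b‖ = ‖b‖ * ‖a - normalize b‖ := by
    rw [← norm_smul_of_nonneg (norm_nonneg b), smul_sub, norm_smul_normalize]
  have h_pow : ‖b‖ ^ ρ ≤ ‖b‖ := Real.rpow_le_self_of_le_one (norm_nonneg b) hb hρ
  have h_gain : ‖b‖ ^ ρ * ‖a - normalize b‖ ^ ρ ≤ ‖b‖ * ‖a - normalize b‖ ^ ρ := by gcongr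
  rw [ha, min_eq_right hb, normalize_eq_self_of_norm_eq_one ha, h_norm,
    Real.mul_rpow (norm_nonneg _) (norm_nonneg _)]
  linear_combination 2 * c * h_gain

lemma exists_mul_rpow_le_midpoint_of_norm_sub_le {E : Type*} [NormedAddCommGroup E]
    {p ρ : ℝ} (hρ : 2 ≤ ρ) (hp : 1 < p) : ∃ k > 0, ∀ a b : E,
      ‖a‖ = 1 → ‖b‖ ≤ 1 → ‖a - b‖ ≤ 2 * (1 - ‖b‖) →
      k * ‖a - b‖ ^ ρ ≤ (1 + ‖b‖ ^ p) / 2 - (‖a + b‖ / 2) ^ p := by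
  obtain ⟨m, hm, h_mid⟩ := exists_mul_sq_le_midpoint_rpow hp
  refine ⟨m * (1 / 4) ^ ρ, by positivity, fun a b ha hb h_radial => ?_⟩
  have h_sq : (1 / 4) ^ ρ * ‖a - b‖ ^ ρ ≤ ((1 - ‖b‖) / 2) ^ 2 := by
    rw [← Real.mul_rpow (by norm_num) (norm_nonneg _), ← Real.rpow_two]
    calc (1 / 4 * ‖a - b‖) ^ ρ ≤ (1 / 4 * ‖a - b‖) ^ (2 : ℝ) :=
          Real.rpow_le_rpow_of_exponent_ge' (by positivity) (by linarith [norm_nonneg b])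
            zero_le_two hρ
      _ ≤ ((1 - ‖b‖) / 2) ^ (2 : ℝ) := by
          gcongr
          linarith
  have h_mono : (‖a + b‖ / 2) ^ p ≤ ((1 + ‖b‖) / 2) ^ p := by
    gcongr
    exact (norm_add_le a b).trans_eq (by rw [ha])
  linear_combination m * h_sq + h_mid ‖b‖ (norm_nonneg b) hb + h_mono

lemma PowerConvex.exists_mul_rpow_le_midpoint_of_le_norm_sub {p ρ : ℝ} (h : PowerConvex X ρ)
    (hρ : 1 ≤ ρ) (hp : 1 < p) :
    ∃ k > 0, ∀ a b : X, ‖a‖ = 1 → ‖b‖ ≤ 1 → 2 * (1 - ‖b‖) ≤ ‖a - b‖ →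
      k * ‖a - b‖ ^ ρ ≤ (1 + ‖b‖ ^ p) / 2 - (‖a + b‖ / 2) ^ p := by
  obtain ⟨c, hc, h_tri⟩ := h.exists_norm_add_le_of_norm_eq_one hρ
  obtain ⟨m, hm, h_mid⟩ := exists_mul_sq_le_midpoint_rpow hp
  refine ⟨(1 / 2) ^ (p - 1) * c * (1 / 2) ^ ρ, by positivity, fun a b ha hb h_angular => ?_⟩
  have h_angle : 1 / 2 * ‖a - b‖ ≤ ‖‖b‖ • a - b‖ := by
    have h_radius : ‖a - ‖b‖ • a‖ = 1 - ‖b‖ := by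
      nth_rewrite 1 [← one_smul ℝ a]
      rw [← sub_smul, norm_smul, ha, mul_one, Real.norm_of_nonneg (by linarith)]
    linarith [norm_sub_le_norm_sub_add_norm_sub a (‖b‖ • a) b]
  have h_gain : (1 / 2) ^ ρ * ‖a - b‖ ^ ρ ≤ ‖‖b‖ • a - b‖ ^ ρ := by
    rw [← Real.mul_rpow (by norm_num) (norm_nonneg _)]
    gcongr
  have h_drop : c * ((1 / 2) ^ ρ * ‖a - b‖ ^ ρ) ≤ (1 + ‖b‖) / 2 - ‖a + b‖ / 2 := by
    linear_combination h_tri a b ha hb / 2 + c * h_gain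
  have h_pow := rpow_sub_one_mul_sub_le_rpow_sub_rpow (v := ‖a + b‖ / 2) (w := (1 + ‖b‖) / 2) hp
    (by positivity) (by linarith [norm_add_le a b])
  have h_convex : 0 ≤ (1 + ‖b‖ ^ p) / 2 - ((1 + ‖b‖) / 2) ^ p :=
    (by positivity : 0 ≤ m * ((1 - ‖b‖) / 2) ^ 2).trans (h_mid ‖b‖ (norm_nonneg b) hb)
  calc (1 / 2) ^ (p - 1) * c * (1 / 2) ^ ρ * ‖a - b‖ ^ ρ
      = (1 / 2) ^ (p - 1) * (c * ((1 / 2) ^ ρ * ‖a - b‖ ^ ρ)) := by ring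
    _ ≤ ((1 + ‖b‖) / 2) ^ (p - 1) * ((1 + ‖b‖) / 2 - ‖a + b‖ / 2) := by
      gcongr
      linarith [norm_nonneg b]
    _ ≤ (1 + ‖b‖ ^ p) / 2 - (‖a + b‖ / 2) ^ p := by linarith

lemma PowerConvex.exists_mul_rpow_le_midpoint_of_norm_eq_one {p ρ : ℝ} (h : PowerConvex X ρ)
    (hρ : 2 ≤ ρ) (hp : 1 < p) : ∃ k > 0, ∀ a b : X, ‖a‖ = 1 → ‖b‖ ≤ 1 →
      k * ‖a - b‖ ^ ρ ≤ (1 + ‖b‖ ^ p) / 2 - (‖a + b‖ / 2) ^ p := by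
  obtain ⟨k₁, hk₁, h_radial⟩ := exists_mul_rpow_le_midpoint_of_norm_sub_le (E := X) hρ hp
  obtain ⟨k₂, hk₂, h_angular⟩ := h.exists_mul_rpow_le_midpoint_of_le_norm_sub (by linarith) hp
  refine ⟨min k₁ k₂, lt_min hk₁ hk₂, fun a b ha hb => ?_⟩
  rcases le_total ‖a - b‖ (2 * (1 - ‖b‖)) with hab | hab
  · refine le_trans ?_ (h_radial a b ha hb hab)
    gcongr
    exact min_le_left _ _
  · refine le_trans ?_ (h_angular a b ha hb hab)
    gcongr
    exact min_le_right _ _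

lemma PowerConvex.exists_mul_rpow_le_midpoint {p ρ : ℝ} (h : PowerConvex X ρ) (hρ : 2 ≤ ρ)
    (hp : 1 < p) (hpρ : p ≤ ρ) {R : ℝ} (hR : 0 < R) : ∃ k > 0, ∀ a b : X, ‖a‖ ≤ R → ‖b‖ ≤ R →
      k * ‖a - b‖ ^ ρ ≤ (‖a‖ ^ p + ‖b‖ ^ p) / 2 - (‖a + b‖ / 2) ^ p := by
  obtain ⟨k, hk, h_unit⟩ := h.exists_mul_rpow_le_midpoint_of_norm_eq_one hρ hp
  refine ⟨k * R ^ (p - ρ), by positivity, fun a b ha hb => ?_⟩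
  wlog hab : ‖b‖ ≤ ‖a‖ generalizing a b
  · rw [norm_sub_rev, add_comm a, add_comm (‖a‖ ^ p)]
    exact this b a hb ha (le_of_not_ge hab)
  rcases eq_or_ne a 0 with rfl | ha0
  · obtain rfl : b = 0 := norm_le_zero_iff.1 (by simpa using hab)
    simp [Real.zero_rpow (by linarith : ρ ≠ 0), Real.zero_rpow (by linarith : p ≠ 0)]
  set r := ‖a‖ with hr
  have hr0 : 0 < r := norm_pos_iff.2 ha0
  have h_norm : ∀ v : X, ‖v‖ = r * ‖r⁻¹ • v‖ := fun v => by
    rw [← norm_smul_of_nonneg hr0.le, smul_inv_smul₀ hr0.ne']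
  have h_norm_b : ‖r⁻¹ • b‖ ≤ 1 := by
    rw [norm_smul, norm_inv, hr, norm_norm, inv_mul_le_one₀ hr0]
    exact hab
  have h_scaled := h_unit _ _ (norm_normalize ha0) h_norm_b
  rw [NormedSpace.normalize, ← smul_sub, ← smul_add] at h_scaled
  calc k * R ^ (p - ρ) * ‖a - b‖ ^ ρ ≤ k * r ^ (p - ρ) * ‖a - b‖ ^ ρ := by
        gcongr k * ?_ * _
        exact Real.rpow_le_rpow_of_nonpos hr0 ha (by linarith)
    _ = r ^ p * (k * ‖r⁻¹ • (a - b)‖ ^ ρ) := by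
      rw [h_norm (a - b), Real.mul_rpow hr0.le (norm_nonneg _), Real.rpow_sub hr0]
      field_simp
    _ ≤ r ^ p * ((1 + ‖r⁻¹ • b‖ ^ p) / 2 - (‖r⁻¹ • (a + b)‖ / 2) ^ p) := by gcongr
    _ = (r ^ p + ‖b‖ ^ p) / 2 - (‖a + b‖ / 2) ^ p := by
      rw [h_norm b, h_norm (a + b), Real.mul_rpow hr0.le (norm_nonneg _), mul_div_assoc,
        Real.mul_rpow hr0.le (by positivity)]
      ring

end NormPower

section DualityMap

lemma hasFDerivAt_of_secondDiff_le {F : X → ℝ} {φ : StrongDual ℝ X} {x : X} {K σ : ℝ}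
    (hσ : 1 < σ) (h_sub : ∀ y, φ (y - x) ≤ F y - F x)
    (h_sec : ∀ᶠ u in 𝓝 0, secondDiff F u x ≤ K * ‖u‖ ^ σ) : HasFDerivAt F φ x := by
  have h_bigO : (fun u => F (x + u) - F x - φ u) =O[𝓝 0] fun u => ‖u‖ ^ (σ - 1) * ‖u‖ := by
    refine Asymptotics.IsBigO.of_bound K ?_
    filter_upwards [h_sec] with u hu
    have h_add := h_sub (x + u)
    have h_sub := h_sub (x - u)
    rw [add_sub_cancel_left] at h_add
    rw [sub_sub_cancel_left, map_neg] at h_sub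
    rw [secondDiff] at hu
    rw [← Real.rpow_add_one' (norm_nonneg u) (by linarith), sub_add_cancel,
      Real.norm_of_nonneg (by linarith), Real.norm_of_nonneg (by positivity)]
    linarith
  have h_lim : Tendsto (fun u : X => ‖u‖ ^ (σ - 1)) (𝓝 0) (𝓝 0) := by
    have := (continuous_norm (E := X)).rpow_const (p := σ - 1) fun _ => Or.inr (by linarith)
    simpa [Real.zero_rpow (by linarith : σ - 1 ≠ 0)] using this.tendsto 0
  have h_small : (fun u : X => ‖u‖ ^ (σ - 1) * ‖u‖) =o[𝓝 0] fun u : X => 1 * ‖u‖ :=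
    ((Asymptotics.isLittleO_one_iff ℝ).2 h_lim).mul_isBigO (Asymptotics.isBigO_refl _ _)
  simp only [one_mul] at h_small
  exact hasFDerivAt_iff_isLittleO_nhds_zero.2 (h_bigO.trans_isLittleO h_small.of_norm_right)

lemma norm_rpow_smul_apply_sub_le {p : ℝ} (hp : 1 < p) {g : StrongDual ℝ X} {x : X}
    (hg : ‖g‖ ≤ 1) (hgx : g x = ‖x‖) (y : X) :
    (‖x‖ ^ (p - 1) • g) (y - x) ≤ 1 / p * ‖y‖ ^ p - 1 / p * ‖x‖ ^ p := by
  have h_g : g (y - x) ≤ ‖y‖ - ‖x‖ := by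
    have := (le_abs_self _).trans (g.le_of_opNorm_le hg y)
    rw [map_sub, hgx]
    linarith
  have h_tangent := rpow_add_mul_sub_le_rpow hp (norm_nonneg y) (norm_nonneg x)
  calc (‖x‖ ^ (p - 1) • g) (y - x) ≤ ‖x‖ ^ (p - 1) * (‖y‖ - ‖x‖) := by
        rw [smul_apply, smul_eq_mul]
        gcongr
    _ = 1 / p * (p * ‖x‖ ^ (p - 1) * (‖y‖ - ‖x‖)) := by field_simp
    _ ≤ 1 / p * (‖y‖ ^ p - ‖x‖ ^ p) := by
        gcongr
        linarith
    _ = 1 / p * ‖y‖ ^ p - 1 / p * ‖x‖ ^ p := mul_sub _ _ _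

variable {p σ : ℝ}

lemma PowerSmooth.exists_dualityMap_eq_smul (h : PowerSmooth X σ) (hp : 1 < p) (x : X) :
    ∃ g : StrongDual ℝ X, ‖g‖ ≤ 1 ∧ g x = ‖x‖ ∧ dualityMap p x = ‖x‖ ^ (p - 1) • g := by
  obtain ⟨g, hg, hgx⟩ := exists_dual_vector'' ℝ x
  refine ⟨g, hg, hgx, HasFDerivAt.fderiv ?_⟩
  have h_min : 1 < min σ (min 2 p) := lt_min h.1 (lt_min one_lt_two hp)
  obtain ⟨K, -, h_sec⟩ := (h.mono h_min (min_le_left _ _)).exists_secondDiff_norm_rpow_le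
    ((min_le_right _ _).trans (min_le_left _ _)) ((min_le_right _ _).trans (min_le_right _ _))
    (R := ‖x‖ + 1) (by positivity)
  refine hasFDerivAt_of_secondDiff_le (K := 1 / p * K) h_min
    (norm_rpow_smul_apply_sub_le hp hg hgx) ?_
  filter_upwards [Metric.closedBall_mem_nhds (0 : X) one_pos] with u hu
  rw [mem_closedBall_zero_iff] at hu
  have h_le := h_sec x u (by linarith) (by linarith [norm_nonneg x])
  simp only [secondDiff] at h_le ⊢
  linear_combination 1 / p * h_le

lemma PowerSmooth.norm_dualityMap_le (h : PowerSmooth X σ) (hp : 1 < p) (x : X) :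
    ‖dualityMap p x‖ ≤ ‖x‖ ^ (p - 1) := by
  obtain ⟨g, hg, -, h_eq⟩ := h.exists_dualityMap_eq_smul hp x
  rw [h_eq, norm_smul, Real.norm_of_nonneg (by positivity)]
  exact mul_le_of_le_one_right (by positivity) hg

lemma PowerSmooth.dualityMap_apply_self (h : PowerSmooth X σ) (hp : 1 < p) (x : X) :
    dualityMap p x x = ‖x‖ ^ p := by
  obtain ⟨g, -, hgx, h_eq⟩ := h.exists_dualityMap_eq_smul hp x
  rw [h_eq, smul_apply, hgx, smul_eq_mul,
    ← Real.rpow_add_one' (norm_nonneg x) (by linarith), sub_add_cancel]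

end DualityMap

section BregmanDist

variable {p σ : ℝ}

lemma PowerSmooth.bregmanDist_nonneg (h : PowerSmooth X σ) (hp : 1 < p) (y x : X) :
    0 ≤ bregmanDist p y x := by
  obtain ⟨g, hg, hgx, h_eq⟩ := h.exists_dualityMap_eq_smul hp x
  rw [bregmanDist, h_eq]
  exact sub_nonneg.2 (norm_rpow_smul_apply_sub_le hp hg hgx y)

lemma PowerSmooth.bregmanDist_zero_left (h : PowerSmooth X σ) (hp : 1 < p) (x : X) :
    bregmanDist p 0 x = (1 - 1 / p) * ‖x‖ ^ p := by
  rw [bregmanDist, norm_zero, Real.zero_rpow (by linarith), zero_sub, map_neg,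
    h.dualityMap_apply_self hp]
  ring

lemma bregmanDist_self (p : ℝ) (x : X) : bregmanDist p x x = 0 := by simp [bregmanDist]

lemma continuous_bregmanDist_left (hp : 0 ≤ p) (x : X) :
    Continuous fun y => bregmanDist p y x := by
  have := (continuous_norm (E := X)).rpow_const (p := p) fun _ => Or.inr hp
  simp only [bregmanDist]
  fun_prop

lemma secondDiff_bregmanDist (p : ℝ) (x u y : X) :
    secondDiff (fun z => bregmanDist p z x) u y = 1 / p * secondDiff (fun z => ‖z‖ ^ p) u y := by
  simp only [secondDiff, bregmanDist, map_sub, map_add]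
  ring

lemma PowerSmooth.exists_norm_le_of_bregmanDist_le (h : PowerSmooth X σ) (hp : 1 < p) {R : ℝ}
    (hR : 0 ≤ R) (T : ℝ) : ∃ B, ∀ x y : X, ‖x‖ ≤ R → bregmanDist p y x ≤ T → ‖y‖ ≤ B := by
  refine ⟨T + (R ^ (p - 1) + 1) ^ p.conjExponent / p.conjExponent, fun x y hx hy => ?_⟩
  have h_young := Real.young_inequality_of_nonneg (norm_nonneg y)
    (by positivity : 0 ≤ R ^ (p - 1) + 1) (.conjExponent hp)
  have h_norm : ‖dualityMap p x‖ ≤ R ^ (p - 1) := (h.norm_dualityMap_le hp x).trans <|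
    Real.rpow_le_rpow (norm_nonneg x) hx (by linarith)
  have h_dual : dualityMap p x y ≤ R ^ (p - 1) * ‖y‖ :=
    (le_abs_self _).trans ((dualityMap p x).le_of_opNorm_le h_norm y)
  have h_zero : 0 ≤ bregmanDist p 0 x := h.bregmanDist_nonneg hp 0 x
  have h_split : bregmanDist p y x =
      1 / p * ‖y‖ ^ p - dualityMap p x y + bregmanDist p 0 x := by
    simp only [bregmanDist, map_sub, map_zero, norm_zero, Real.zero_rpow (by linarith : p ≠ 0)]
    ring
  linear_combination h_young + h_dual + h_zero + hy - h_split

lemma PowerSmooth.exists_forall_bregmanDist_le (h : PowerSmooth X σ) (hp : 1 < p) {R : ℝ}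
    (y : X) : ∃ T, ∀ x : X, ‖x‖ ≤ R → bregmanDist p y x ≤ T := by
  refine ⟨1 / p * ‖y‖ ^ p + R ^ (p - 1) * (‖y‖ + R), fun x hx => ?_⟩
  have hR : 0 ≤ R := (norm_nonneg x).trans hx
  have h_norm : ‖dualityMap p x‖ ≤ R ^ (p - 1) := (h.norm_dualityMap_le hp x).trans <|
    Real.rpow_le_rpow (norm_nonneg x) hx (by linarith)
  have h_dual : -dualityMap p x (y - x) ≤ R ^ (p - 1) * (‖y‖ + R) := by
    refine (neg_le_abs _).trans (((dualityMap p x).le_of_opNorm_le h_norm _).trans ?_)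
    gcongr
    exact (norm_sub_le y x).trans (by gcongr)
  have h_pow : 0 ≤ 1 / p * ‖x‖ ^ p := by positivity
  rw [bregmanDist]
  linarith

lemma PowerConvex.exists_mul_rpow_le_bregmanDist_midpoint {ρ : ℝ} (h : PowerConvex X ρ)
    (hρ : 2 ≤ ρ) (hp : 1 < p) (hpρ : p ≤ ρ) {R : ℝ} (hR : 0 < R) :
    ∃ k > 0, ∀ x a b : X, ‖a‖ ≤ R → ‖b‖ ≤ R → k * ‖a - b‖ ^ ρ ≤
      (bregmanDist p a x + bregmanDist p b x) / 2 - bregmanDist p (midpoint ℝ a b) x := by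
  obtain ⟨k, hk, h_mid⟩ := h.exists_mul_rpow_le_midpoint hρ hp hpρ hR
  refine ⟨1 / p * k, by positivity, fun x a b ha hb => ?_⟩
  have h_norm : ‖midpoint ℝ a b‖ = ‖a + b‖ / 2 := by
    rw [midpoint_eq_smul_add, norm_smul_of_nonneg (by norm_num), invOf_eq_inv, inv_mul_eq_div]
  have h_dual : dualityMap p x (midpoint ℝ a b) = (dualityMap p x a + dualityMap p x b) / 2 := by
    rw [midpoint_eq_smul_add, map_smul, map_add, smul_eq_mul, invOf_eq_inv, inv_mul_eq_div]
  simp only [bregmanDist, map_sub, h_norm, h_dual]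
  linear_combination 1 / p * h_mid a b ha hb

lemma PowerSmooth.exists_bregmanDist_le_mul_rpow (h : PowerSmooth X σ) (hσ : σ ≤ 2) (hp : 1 < p)
    (hσp : σ ≤ p) {R : ℝ} (hR : 0 < R) :
    ∃ K > 0, ∀ x y : X, ‖x‖ ≤ R → ‖y - x‖ ≤ R → bregmanDist p y x ≤ K * ‖y - x‖ ^ σ := by
  obtain ⟨K, hK, h_sec⟩ := h.exists_secondDiff_norm_rpow_le hσ hσp hR
  refine ⟨1 / p * K, by positivity, fun x y hx hyx => ?_⟩
  have h_reflect := h.bregmanDist_nonneg hp (x - (y - x)) x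
  calc bregmanDist p y x ≤ secondDiff (fun z => bregmanDist p z x) (y - x) x := by
        rw [secondDiff, add_sub_cancel, bregmanDist_self]
        linarith
    _ = 1 / p * secondDiff (fun z => ‖z‖ ^ p) (y - x) x := secondDiff_bregmanDist _ _ _ _
    _ ≤ 1 / p * (K * ‖y - x‖ ^ σ) := by
        gcongr
        exact h_sec x (y - x) hx hyx
    _ = 1 / p * K * ‖y - x‖ ^ σ := (mul_assoc _ _ _).symm

end BregmanDist

section BregmanProj

lemma exists_isMinOn_of_mul_rpow_le_midpoint [CompleteSpace X] {F : X → ℝ} {S : Set X}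
    {k ρ L : ℝ} (hF : Continuous F) (hS : IsClosed S) (h_conv : Convex ℝ S)
    (h_bdd : BddBelow (F '' S)) (hk : 0 < k) (hρ : 0 < ρ) (hL : ∃ m ∈ S, F m < L)
    (h_unif : ∀ a ∈ S, ∀ b ∈ S, F a ≤ L → F b ≤ L →
      k * ‖a - b‖ ^ ρ ≤ (F a + F b) / 2 - F (midpoint ℝ a b)) : ∃ y ∈ S, IsMinOn F S y := by
  obtain ⟨m₀, hm₀, hm₀L⟩ := hL
  have h_inf : ∀ m ∈ S, sInf (F '' S) ≤ F m := fun m hm => csInf_le h_bdd ⟨m, hm, rfl⟩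
  obtain ⟨_, -, h_lim, h_mem⟩ := exists_seq_tendsto_sInf
    (Set.nonempty_of_mem (Set.mem_image_of_mem F hm₀)) h_bdd
  choose m hm hFm using h_mem
  rw [← funext hFm] at h_lim
  have h_cauchy : CauchySeq m := by
    refine Metric.cauchySeq_iff.2 fun ε hε => ?_
    have h_gap : 0 < k * ε ^ ρ := by positivity
    obtain ⟨N, hN⟩ := eventually_atTop.1 (h_lim.eventually_lt_const
      (lt_min (lt_add_of_pos_right _ h_gap) ((h_inf m₀ hm₀).trans_lt hm₀L)))
    refine ⟨N, fun i hi j hj => ?_⟩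
    obtain ⟨hi_gap, hiL⟩ := lt_min_iff.1 (hN i hi)
    obtain ⟨hj_gap, hjL⟩ := lt_min_iff.1 (hN j hj)
    have h_mid := h_inf _ (h_conv.midpoint_mem (hm i) (hm j))
    have h_le := h_unif _ (hm i) _ (hm j) hiL.le hjL.le
    have h_lt : ‖m i - m j‖ ^ ρ < ε ^ ρ := lt_of_mul_lt_mul_left (by linarith) hk.le
    rw [dist_eq_norm]
    exact (Real.rpow_lt_rpow_iff (norm_nonneg _) hε.le hρ).1 h_lt
  obtain ⟨y, hy⟩ := cauchySeq_tendsto_of_complete h_cauchy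
  refine ⟨y, hS.mem_of_tendsto hy (.of_forall hm), fun z hz => ?_⟩
  exact (tendsto_nhds_unique ((hF.tendsto y).comp hy) h_lim).trans_le (h_inf z hz)

lemma bregmanProj_spec {p : ℝ} {S : Set X} {x : X}
    (h : ∃ y ∈ S, IsMinOn (fun y => bregmanDist p y x) S y) :
    bregmanProj p S x ∈ S ∧ ∀ m ∈ S, bregmanDistSet p S x ≤ bregmanDist p m x :=
  Classical.epsilon_spec (p := fun y => y ∈ S ∧ ∀ m ∈ S, bregmanDist p y x ≤ bregmanDist p m x) h

variable {p ρ σ : ℝ}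

lemma PowerConvex.exists_isMinOn_bregmanDist [CompleteSpace X] (h : PowerConvex X ρ)
    (h_smooth : PowerSmooth X σ) (hρ : 2 ≤ ρ) (hp : 1 < p) (hpρ : p ≤ ρ) {S : Set X}
    (hS : IsClosed S) (h_conv : Convex ℝ S) (h_ne : S.Nonempty) (x : X) :
    ∃ y ∈ S, IsMinOn (fun y => bregmanDist p y x) S y := by
  obtain ⟨m₀, hm₀⟩ := h_ne
  obtain ⟨B, hB⟩ := h_smooth.exists_norm_le_of_bregmanDist_le hp (norm_nonneg x)
    (bregmanDist p m₀ x + 1)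
  obtain ⟨k, hk, h_mid⟩ := h.exists_mul_rpow_le_bregmanDist_midpoint hρ hp hpρ
    (lt_max_of_lt_right one_pos : 0 < max B 1)
  refine exists_isMinOn_of_mul_rpow_le_midpoint (continuous_bregmanDist_left (by linarith) x) hS
    h_conv ⟨0, ?_⟩ hk (by linarith : 0 < ρ) ⟨m₀, hm₀, lt_add_one _⟩ fun a _ b _ ha hb => ?_
  · rintro _ ⟨y, -, rfl⟩
    exact h_smooth.bregmanDist_nonneg hp y x
  · exact h_mid x a b ((hB x a le_rfl ha).trans (le_max_left _ _))
      ((hB x b le_rfl hb).trans (le_max_left _ _))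

end BregmanProj

section BregmanDistBounds

variable {p ρ σ R : ℝ} {S : Set X}

/-- Two-sided power bounds, uniform over the points `x` with `‖x‖ < R`, for the Bregman distance
`D_p(S, x)` in terms of the metric distance from `x` to `S`. -/
def BregmanDistBounds (p ρ σ R : ℝ) (S : Set X) : Prop :=
  ∃ k > 0, ∃ K > 0, ∀ x : X, ‖x‖ < R →
    k * Metric.infDist x S ^ ρ ≤ bregmanDistSet p S x ∧
      bregmanDistSet p S x ≤ K * Metric.infDist x S ^ σ

lemma BregmanDistBounds.exists_rpow_one_div_bounds (h : BregmanDistBounds p ρ σ R S)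
    (hρ : 0 < ρ) (hσ : 0 < σ) : ∃ C₁ > 0, ∃ C₂ > 0, ∀ x : X, ‖x‖ < R →
      Metric.infDist x S ≤ C₁ * bregmanDistSet p S x ^ (1 / ρ) ∧
        C₂ * bregmanDistSet p S x ^ (1 / σ) ≤ Metric.infDist x S := by
  obtain ⟨k, hk, K, hK, h_bounds⟩ := h
  refine ⟨k⁻¹ ^ (1 / ρ), by positivity, K⁻¹ ^ (1 / σ), by positivity, fun x hx => ?_⟩
  obtain ⟨h_lower, h_upper⟩ := h_bounds x hx
  have h_dist : 0 ≤ Metric.infDist x S := Metric.infDist_nonneg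
  have h_nonneg : 0 ≤ bregmanDistSet p S x := le_trans (by positivity) h_lower
  rw [← Real.mul_rpow (by positivity) h_nonneg, ← Real.mul_rpow (by positivity) h_nonneg, one_div,
    one_div, Real.le_rpow_inv_iff_of_pos h_dist (by positivity) hρ,
    Real.rpow_inv_le_iff_of_pos (by positivity) h_dist hσ]
  exact ⟨(le_inv_mul_iff₀ hk).2 h_lower, (inv_mul_le_iff₀ hK).2 h_upper⟩

lemma PowerSmooth.bregmanDistSet_eq_zero_of_mem (h : PowerSmooth X σ) (hp : 1 < p) {x : X}
    (hx : x ∈ S) : bregmanDistSet p S x = 0 := by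
  have h_min : IsMinOn (fun y => bregmanDist p y x) S x := isMinOn_iff.2 fun y _ => by
    rw [bregmanDist_self]
    exact h.bregmanDist_nonneg hp y x
  refine le_antisymm ?_ (h.bregmanDist_nonneg hp _ x)
  exact ((bregmanProj_spec ⟨x, hx, h_min⟩).2 x hx).trans_eq (bregmanDist_self p x)

lemma PowerSmooth.bregmanDistBounds_univ (h : PowerSmooth X σ) (hp : 1 < p) (hρ : ρ ≠ 0) :
    BregmanDistBounds p ρ σ R (Set.univ : Set X) := by
  refine ⟨1, one_pos, 1, one_pos, fun x _ => ?_⟩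
  rw [h.bregmanDistSet_eq_zero_of_mem hp (Set.mem_univ x),
    Metric.infDist_zero_of_mem (Set.mem_univ x), Real.zero_rpow hρ,
    Real.zero_rpow (by linarith [h.1])]
  simp only [mul_zero, le_refl, and_self]

lemma bregmanDistSet_singleton (p : ℝ) (y x : X) :
    bregmanDistSet p {y} x = bregmanDist p y x := by
  have h_min : IsMinOn (fun z => bregmanDist p z x) {y} y := by
    simp only [isMinOn_iff, Set.mem_singleton_iff, forall_eq, le_refl]
  have h_mem := (bregmanProj_spec ⟨y, Set.mem_singleton y, h_min⟩).1
  rw [bregmanDistSet, Set.mem_singleton_iff.1 h_mem]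

lemma PowerSmooth.bregmanDistBounds_singleton_zero (h : PowerSmooth X σ) (hp : 1 < p)
    (hσp : σ ≤ p) (hpρ : p ≤ ρ) (hR : 0 < R) : BregmanDistBounds p ρ σ R ({0} : Set X) := by
  have hq : 0 < 1 - 1 / p := by
    rw [sub_pos, div_lt_one (by linarith)]
    exact hp
  refine ⟨(1 - 1 / p) * (R ^ (ρ - p))⁻¹, by positivity, (1 - 1 / p) * R ^ (p - σ), by positivity,
    fun x hx => ?_⟩
  rw [bregmanDistSet_singleton, h.bregmanDist_zero_left hp, Metric.infDist_singleton,
    dist_zero_right, mul_assoc, mul_assoc]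
  constructor <;> gcongr
  · rw [inv_mul_le_iff₀ (by positivity)]
    exact rpow_le_rpow_sub_mul_rpow (norm_nonneg x) hx.le (by linarith) hpρ
  · exact rpow_le_rpow_sub_mul_rpow (norm_nonneg x) hx.le (by linarith [h.1]) hσp

lemma PowerConvex.exists_mul_infDist_rpow_le_bregmanDistSet [CompleteSpace X]
    (h : PowerConvex X ρ) (h_smooth : PowerSmooth X σ) (hρ : 2 ≤ ρ) (hp : 1 < p) (hpρ : p ≤ ρ)
    (hS : IsClosed S) (h_conv : Convex ℝ S) (h_ne : S.Nonempty) (hR : 0 < R) :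
    ∃ k > 0, ∀ x : X, ‖x‖ ≤ R → k * Metric.infDist x S ^ ρ ≤ bregmanDistSet p S x := by
  obtain ⟨m₀, hm₀⟩ := h_ne
  obtain ⟨T, hT⟩ := h_smooth.exists_forall_bregmanDist_le hp (R := R) m₀
  obtain ⟨B, hB⟩ := h_smooth.exists_norm_le_of_bregmanDist_le hp hR.le T
  obtain ⟨k, hk, h_mid⟩ := h.exists_mul_rpow_le_bregmanDist_midpoint hρ hp hpρ
    (lt_max_of_lt_right hR : 0 < max B R)
  refine ⟨2 * k, by positivity, fun x hx => ?_⟩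
  set y := bregmanProj p S x
  obtain ⟨hyS, hy_min⟩ :=
    bregmanProj_spec (h.exists_isMinOn_bregmanDist h_smooth hρ hp hpρ hS h_conv ⟨m₀, hm₀⟩ x)
  have hyB : ‖y‖ ≤ B := hB x y hx ((hy_min m₀ hm₀).trans (hT x hx))
  have h_le := h_mid x x y (hx.trans (le_max_right _ _)) (hyB.trans (le_max_left _ _))
  rw [bregmanDist_self] at h_le
  calc 2 * k * Metric.infDist x S ^ ρ ≤ 2 * k * ‖x - y‖ ^ ρ := by
        gcongr
        · exact Metric.infDist_nonneg
        · exact dist_eq_norm x y ▸ Metric.infDist_le_dist_of_mem hyS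
    _ ≤ bregmanDist p y x := by
        linarith [h_smooth.bregmanDist_nonneg hp (midpoint ℝ x y) x]

lemma PowerSmooth.exists_bregmanDistSet_le_mul_infDist_rpow (h : PowerSmooth X σ) (hσ : σ ≤ 2)
    (hp : 1 < p) (hσp : σ ≤ p) (h_ne : S.Nonempty)
    (h_min : ∀ x : X, ∃ y ∈ S, IsMinOn (fun y => bregmanDist p y x) S y) (hR : 0 < R) :
    ∃ K > 0, ∀ x : X, ‖x‖ ≤ R → bregmanDistSet p S x ≤ K * Metric.infDist x S ^ σ := by
  obtain ⟨m₀, hm₀⟩ := h_ne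
  obtain ⟨K, hK, h_le⟩ := h.exists_bregmanDist_le_mul_rpow hσ hp hσp
    (by positivity : 0 < R + ‖m₀‖ + R)
  refine ⟨K, hK, fun x hx => ?_⟩
  have h_dist : Metric.infDist x S < R + ‖m₀‖ + R := by
    have := Metric.infDist_le_dist_of_mem (x := x) hm₀
    linarith [dist_le_norm_add_norm x m₀]
  have h_lim : Tendsto (fun r => K * r ^ σ) (𝓝[>] Metric.infDist x S)
      (𝓝 (K * Metric.infDist x S ^ σ)) :=
    ((Real.continuousAt_rpow_const _ _ (.inr (by linarith [h.1]))).const_mul K).mono_left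
      nhdsWithin_le_nhds
  refine ge_of_tendsto h_lim ?_
  filter_upwards [Ioo_mem_nhdsGT h_dist] with r hr
  obtain ⟨m, hm, hmr⟩ := (Metric.infDist_lt_iff ⟨m₀, hm₀⟩).1 hr.1
  rw [dist_comm, dist_eq_norm] at hmr
  calc bregmanDistSet p S x ≤ bregmanDist p m x := (bregmanProj_spec (h_min x)).2 m hm
    _ ≤ K * ‖m - x‖ ^ σ :=
      h_le x m (by linarith [norm_nonneg m₀]) (hmr.le.trans hr.2.le)
    _ ≤ K * r ^ σ := by
      gcongr
      linarith [h.1]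

lemma PowerConvex.bregmanDistBounds [CompleteSpace X] (h : PowerConvex X ρ)
    (h_smooth : PowerSmooth X σ) (hρ : 2 ≤ ρ) (hσ : σ ≤ 2) (hp : 1 < p) (hσp : σ ≤ p)
    (hpρ : p ≤ ρ) (hS : IsClosed S) (h_conv : Convex ℝ S) (h_ne : S.Nonempty) (hR : 0 < R) :
    BregmanDistBounds p ρ σ R S := by
  obtain ⟨k, hk, h_lower⟩ := h.exists_mul_infDist_rpow_le_bregmanDistSet h_smooth hρ hp hpρ hS
    h_conv h_ne hR
  obtain ⟨K, hK, h_upper⟩ := h_smooth.exists_bregmanDistSet_le_mul_infDist_rpow hσ hp hσp h_ne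
    (h.exists_isMinOn_bregmanDist h_smooth hρ hp hpρ hS h_conv h_ne) hR
  exact ⟨k, hk, K, hK, fun x hx => ⟨h_lower x hx.le, h_upper x hx.le⟩⟩

end BregmanDistBounds

theorem statement4 {X : Type*} [NormedAddCommGroup X] [NormedSpace ℝ X] [CompleteSpace X]
    (ρ σ p : ℝ) (hconv : PowerConvex X ρ) (hsmooth : PowerSmooth X σ)
    (hp : 1 < p) (hσp : σ ≤ p) (hpρ : p ≤ ρ)
    (M : Submodule ℝ X) (hM : IsClosed (M : Set X)) :
    ∀ R > (0 : ℝ), ∃ C₁ > (0 : ℝ), ∃ C₂ > (0 : ℝ), ∀ x : X, ‖x‖ < R →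
      Metric.infDist x (M : Set X) ≤ C₁ * (bregmanDist p (bregmanProj p (M : Set X) x) x) ^ (1 / ρ) ∧
      C₂ * (bregmanDist p (bregmanProj p (M : Set X) x) x) ^ (1 / σ) ≤ Metric.infDist x (M : Set X) := by
  intro R hR
  suffices h : BregmanDistBounds p ρ σ R (M : Set X) from
    h.exists_rpow_one_div_bounds (by linarith) (by linarith [hsmooth.1])
  rcases le_or_gt (Module.rank ℝ X) 1 with h_rank | h_rank
  · rcases eq_bot_or_eq_top_of_rank_le_one h_rank M with rfl | rfl
    · exact hsmooth.bregmanDistBounds_singleton_zero hp hσp hpρ hR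
    · exact hsmooth.bregmanDistBounds_univ hp (by linarith)
  · exact hconv.bregmanDistBounds hsmooth (hconv.two_le (by linarith) h_rank)
      (hsmooth.le_two h_rank) hp hσp hpρ hM M.convex M.nonempty hR
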